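/- Let H be a real Hilbert space, Ψ : ℝ^p → H continuously differentiable (with Fréchet derivative DΨ(θ) : ℝ^p → H depending continuously on θ), and J : ℝ^p → ℝ differentiable with continuous gradient ∇J. Fix θ₀ ∈ ℝ^p and for each τ > 0 let θ(τ) ∈ ℝ^p be a minimizer of Φ_τ(θ) = (1/2τ) ‖Ψ(θ) − Ψ(θ₀)‖² + J(θ). Define G(θ) ∈ ℝ^{p×p} by G(θ)_{ij} = ⟨DΨ(θ)e_i, DΨ(θ)e_j⟩_H. If there exists M > 0 such that ‖θ(τ) − θ₀‖ ≤ M τ for all sufficiently small τ > 0, then G(θ(τ)) · (θ(τ) − θ₀)/τ + ∇J(θ(τ)) → 0 as τ → 0⁺; that is, the parametric JKO update is, at first order, an implicit discretization of the preconditioned gradient flow θ̇ = −G(θ)^{-1} ∇J(θ). -/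

import Mathlib

open Filter Topology Matrix
open scoped RealInnerProductSpace

/-!
The first-order condition at a local minimizer `θ = θ(τ)` says that `τ⁻¹ ⟪Ψ θ - Ψ θ₀, DΨ(θ) ·⟫` is
the negative of the differential of `J` at `θ`. Continuity of `DΨ` at `θ₀` allows the increment
`Ψ θ - Ψ θ₀` to be linearized at the moving point `θ` instead of `θ₀`, with an error
`o(‖θ - θ₀‖) = o(τ)`; after division by `τ` the error vanishes, and what remains is
`⟪DΨ(θ) ((θ - θ₀) / τ), DΨ(θ) ·⟫`.
-/

section Linearization

variable {𝕜 E F : Type*} [NontriviallyNormedField 𝕜] [NormedAddCommGroup E] [NormedSpace 𝕜 E]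
  [NormedAddCommGroup F] [NormedSpace 𝕜 F] {f : E → F} {f' : E → E →L[𝕜] F} {x₀ : E}

theorem isLittleO_clm_apply_sub_of_continuousAt (hf' : ContinuousAt f' x₀) :
    (fun x => (f' x - f' x₀) (x - x₀)) =o[𝓝 x₀] fun x => x - x₀ := by
  have hdiff : (fun x => ‖f' x - f' x₀‖) =o[𝓝 x₀] fun _ => (1 : ℝ) :=
    (Asymptotics.isLittleO_one_iff ℝ).2 (tendsto_iff_norm_sub_tendsto_zero.1 hf')
  have hprod : (fun x => ‖f' x - f' x₀‖ * ‖x - x₀‖) =o[𝓝 x₀] fun x => x - x₀ := by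
    simpa only [one_mul, Asymptotics.isLittleO_norm_right] using
      hdiff.mul_isBigO (Asymptotics.isBigO_refl (fun x => ‖x - x₀‖) (𝓝 x₀))
  exact (Asymptotics.IsBigO.of_norm_le fun x => (f' x - f' x₀).le_opNorm (x - x₀)).trans_isLittleO
    hprod

theorem isLittleO_clm_apply_sub_sub_of_hasFDerivAt (hf : HasFDerivAt f (f' x₀) x₀)
    (hf' : ContinuousAt f' x₀) :
    (fun x => f' x (x - x₀) - (f x - f x₀)) =o[𝓝 x₀] fun x => x - x₀ := by
  refine ((isLittleO_clm_apply_sub_of_continuousAt hf').sub hf.isLittleO).congr_left fun x => ?_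
  rw [_root_.sub_apply]
  abel

end Linearization

section JKO

variable {E H : Type*} [NormedAddCommGroup E] [NormedSpace ℝ E]
  [NormedAddCommGroup H] [InnerProductSpace ℝ H]

/-- The objective `Φ_τ` of one step of the parametric JKO scheme started at `θ₀`. -/
noncomputable def jkoObjective (Ψ : E → H) (J : E → ℝ) (θ₀ : E) (τ : ℝ) (θ : E) : ℝ :=
  1 / (2 * τ) * ‖Ψ θ - Ψ θ₀‖ ^ 2 + J θ

/-- The pullback of the inner product of `H` along `A`, as a map from `E` to its dual. For
`A = DΨ(θ)` it is the metric induced at `θ` by the parametrization `Ψ`, written in coordinates as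
the matrix `G(θ)`. -/
noncomputable def pullbackMetric (A : E →L[ℝ] H) (u : E) : E →L[ℝ] ℝ :=
  innerSL ℝ (A u) ∘L A

variable {Ψ : E → H} {J : E → ℝ} {θ₀ : E}

theorem hasFDerivAt_jkoObjective {Ψ' : E →L[ℝ] H} {J' : E →L[ℝ] ℝ} {θ : E}
    (hΨ : HasFDerivAt Ψ Ψ' θ) (hJ : HasFDerivAt J J' θ) (τ : ℝ) :
    HasFDerivAt (jkoObjective Ψ J θ₀ τ) (τ⁻¹ • (innerSL ℝ (Ψ θ - Ψ θ₀) ∘L Ψ') + J') θ := by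
  refine (((hΨ.sub_const (Ψ θ₀)).norm_sq.const_mul (1 / (2 * τ))).add hJ).congr_fderiv ?_
  ext v
  simp only [_root_.add_apply, _root_.smul_apply, smul_eq_mul, nsmul_eq_mul]
  ring

theorem pullbackMetric_add_eq_of_isLocalMin_jkoObjective {Ψ' : E →L[ℝ] H} {J' : E →L[ℝ] ℝ}
    {θ : E} {τ : ℝ} (hΨ : HasFDerivAt Ψ Ψ' θ) (hJ : HasFDerivAt J J' θ)
    (hmin : IsLocalMin (jkoObjective Ψ J θ₀ τ) θ) :
    pullbackMetric Ψ' (τ⁻¹ • (θ - θ₀)) + J' =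
      innerSL ℝ (τ⁻¹ • (Ψ' (θ - θ₀) - (Ψ θ - Ψ θ₀))) ∘L Ψ' := by
  have hcritical : τ⁻¹ • (innerSL ℝ (Ψ θ - Ψ θ₀) ∘L Ψ') + J' = 0 :=
    hmin.hasFDerivAt_eq_zero (hasFDerivAt_jkoObjective hΨ hJ τ)
  rw [eq_neg_of_add_eq_zero_right hcritical, ← sub_eq_add_neg]
  ext v
  simp only [pullbackMetric, _root_.sub_apply, _root_.smul_apply, ContinuousLinearMap.comp_apply,
    innerSL_apply_apply, smul_eq_mul, map_smul, inner_sub_left (Ψ' _)]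
  ring

theorem parametric_jko_approximates_preconditioned_flow_general
    {DΨ : E → E →L[ℝ] H} {DJ : E → E →L[ℝ] ℝ} {θ : ℝ → E}
    (hΨ : ∀ᶠ x in 𝓝 θ₀, HasFDerivAt Ψ (DΨ x) x) (hDΨ : ContinuousAt DΨ θ₀)
    (hJ : ∀ᶠ x in 𝓝 θ₀, HasFDerivAt J (DJ x) x)
    (hmin : ∀ᶠ τ in 𝓝[>] (0 : ℝ), IsLocalMin (jkoObjective Ψ J θ₀ τ) (θ τ))
    (hbound : (fun τ => θ τ - θ₀) =O[𝓝[>] (0 : ℝ)] fun τ => τ) :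
    Tendsto (fun τ => pullbackMetric (DΨ (θ τ)) (τ⁻¹ • (θ τ - θ₀)) + DJ (θ τ))
      (𝓝[>] (0 : ℝ)) (𝓝 0) := by
  have hθ : Tendsto θ (𝓝[>] (0 : ℝ)) (𝓝 θ₀) :=
    tendsto_sub_nhds_zero_iff.1 (hbound.trans_tendsto (tendsto_id.mono_left nhdsWithin_le_nhds))
  have hremainder : Tendsto
      (fun τ => τ⁻¹ • (DΨ (θ τ) (θ τ - θ₀) - (Ψ (θ τ) - Ψ θ₀))) (𝓝[>] (0 : ℝ)) (𝓝 0) :=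
    (((isLittleO_clm_apply_sub_sub_of_hasFDerivAt hΨ.self_of_nhds hDΨ).comp_tendsto hθ).trans_isBigO
      hbound).tendsto_inv_smul_nhds_zero
  have hcomp : Continuous fun q : H × (E →L[ℝ] H) => innerSL ℝ q.1 ∘L q.2 := by fun_prop
  have hlimit : Tendsto (fun τ =>
      innerSL ℝ (τ⁻¹ • (DΨ (θ τ) (θ τ - θ₀) - (Ψ (θ τ) - Ψ θ₀))) ∘L DΨ (θ τ))
      (𝓝[>] (0 : ℝ)) (𝓝 (innerSL ℝ 0 ∘L DΨ θ₀)) :=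
    (hcomp.tendsto (0, DΨ θ₀)).comp (hremainder.prodMk_nhds (hDΨ.tendsto.comp hθ))
  rw [map_zero, ContinuousLinearMap.zero_comp] at hlimit
  refine hlimit.congr' ?_
  filter_upwards [hθ.eventually hΨ, hθ.eventually hJ, hmin] with τ hΨτ hJτ hminτ
  exact (pullbackMetric_add_eq_of_isLocalMin_jkoObjective hΨτ hJτ hminτ).symm

end JKO

section Coordinates

variable {ι H : Type*} [Fintype ι] [DecidableEq ι] [NormedAddCommGroup H] [InnerProductSpace ℝ H]

theorem gram_mulVec_apply_eq_pullbackMetric_single (A : EuclideanSpace ℝ ι →L[ℝ] H)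
    (u : EuclideanSpace ℝ ι) (i : ι) :
    (gram ℝ (fun j => A (EuclideanSpace.single j 1)) *ᵥ u) i =
      pullbackMetric A u (EuclideanSpace.single i 1) := by
  have hA : A u = ∑ j, u j • A (EuclideanSpace.single j 1) := by
    simpa only [map_sum, map_smul, EuclideanSpace.basisFun_apply, EuclideanSpace.basisFun_repr]
      using congrArg A ((EuclideanSpace.basisFun ι ℝ).sum_repr u).symm
  simp only [mulVec, dotProduct, gram_apply, pullbackMetric, ContinuousLinearMap.comp_apply,
    innerSL_apply_apply, hA, sum_inner, real_inner_smul_left]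
  exact Finset.sum_congr rfl fun j _ => by rw [real_inner_comm, mul_comm]

theorem tendsto_gram_mulVec_add_of_tendsto_pullbackMetric_add {α : Type*} {l : Filter α}
    {A : α → EuclideanSpace ℝ ι →L[ℝ] H} {u g : α → EuclideanSpace ℝ ι}
    (h : Tendsto (fun a => pullbackMetric (A a) (u a) + InnerProductSpace.toDual ℝ _ (g a))
      l (𝓝 0)) :
    Tendsto (fun a => gram ℝ (fun j => A a (EuclideanSpace.single j 1)) *ᵥ u a + g a)
      l (𝓝 0) := by
  refine tendsto_pi_nhds.2 fun i => ?_
  have hi := ((continuous_eval_const (EuclideanSpace.single i (1 : ℝ))).tendsto _).comp h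
  simpa [Function.comp_def, gram_mulVec_apply_eq_pullbackMetric_single,
    EuclideanSpace.inner_single_right] using hi

end Coordinates

/-- **The parametric JKO update is an implicit discretization of the preconditioned
gradient flow `θ̇ = -G(θ)⁻¹ ∇J(θ)`.**
Let `H` be a real Hilbert space, `Ψ : ℝ^p → H` continuously differentiable with Fréchet
derivative `DΨ`, `J : ℝ^p → ℝ` differentiable with continuous gradient `∇J`.  For `τ > 0`
let `θ(τ)` minimize `Φ_τ(θ) = (1/(2τ)) ‖Ψ θ - Ψ θ₀‖² + J θ`, and set
`G(θ)_{ij} = ⟪DΨ(θ) e_i, DΨ(θ) e_j⟫_H`.  If `‖θ(τ) - θ₀‖ ≤ M τ` for all sufficiently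
small `τ > 0` (some `M > 0`), then `G(θ(τ)) (θ(τ) - θ₀)/τ + ∇J(θ(τ)) → 0` as `τ → 0⁺`. -/
theorem parametric_jko_approximates_preconditioned_flow
    {p : ℕ} {H : Type*} [NormedAddCommGroup H] [InnerProductSpace ℝ H] [CompleteSpace H]
    (Ψ : EuclideanSpace ℝ (Fin p) → H)
    (DΨ : EuclideanSpace ℝ (Fin p) → (EuclideanSpace ℝ (Fin p) →L[ℝ] H))
    (hΨ : ∀ θ, HasFDerivAt Ψ (DΨ θ) θ) (hDΨ : Continuous DΨ)
    (J : EuclideanSpace ℝ (Fin p) → ℝ)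
    (gradJ : EuclideanSpace ℝ (Fin p) → EuclideanSpace ℝ (Fin p))
    (hJ : ∀ θ, HasGradientAt J (gradJ θ) θ) (hgradJ : Continuous gradJ)
    (θ₀ : EuclideanSpace ℝ (Fin p))
    (θfun : ℝ → EuclideanSpace ℝ (Fin p))
    (hmin : ∀ τ : ℝ, 0 < τ → ∀ θ : EuclideanSpace ℝ (Fin p),
      1 / (2 * τ) * ‖Ψ (θfun τ) - Ψ θ₀‖ ^ 2 + J (θfun τ)
        ≤ 1 / (2 * τ) * ‖Ψ θ - Ψ θ₀‖ ^ 2 + J θ)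
    (G : EuclideanSpace ℝ (Fin p) → Matrix (Fin p) (Fin p) ℝ)
    (hG : ∀ θ i j, G θ i j
      = ⟪DΨ θ (EuclideanSpace.single i 1), DΨ θ (EuclideanSpace.single j 1)⟫)
    (M : ℝ) (hM : 0 < M)
    (hMbound : ∀ᶠ τ in 𝓝[>] (0 : ℝ), ‖θfun τ - θ₀‖ ≤ M * τ) :
    Tendsto
      (fun τ : ℝ =>
        (G (θfun τ) *ᵥ fun i => (θfun τ i - θ₀ i) / τ) + fun i => gradJ (θfun τ) i)
      (𝓝[>] (0 : ℝ)) (𝓝 0) := by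
  obtain rfl : G = fun θ => gram ℝ fun j => DΨ θ (EuclideanSpace.single j 1) :=
    funext fun θ => Matrix.ext (hG θ)
  have hbound : (fun τ => θfun τ - θ₀) =O[𝓝[>] (0 : ℝ)] fun τ => τ :=
    .of_bound M (hMbound.mono fun τ h => h.trans (by gcongr; exact le_abs_self τ))
  have hflow := parametric_jko_approximates_preconditioned_flow_general (.of_forall hΨ)
    hDΨ.continuousAt (.of_forall fun θ => (hJ θ).hasFDerivAt)
    (eventually_mem_nhdsWithin.mono fun τ hτ => .of_forall (hmin τ hτ)) hbound
  refine (tendsto_gram_mulVec_add_of_tendsto_pullbackMetric_add hflow).congr fun τ => ?_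
  simp only [div_eq_inv_mul]
  rfl
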